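/- Let X be a locally compact Hausdorff space and let k be a bounded symmetric positive definite kernel on X with k(·,x) ∈ C_0(X) for all x ∈ X, with RKHS H. Then k is c0-universal if and only if ∫_X ∫_X k(x,y) dμ(x) dμ(y) > 0 for every nonzero μ ∈ M_b(X). -/

import Mathlib

open MeasureTheory Filter Topology RealInnerProductSpace
open scoped ZeroAtInfty

/-- Integral of a vector-valued function with respect to a finite signed measure,
defined via the Jordan decomposition. -/
noncomputable def svInt {X : Type*} [MeasurableSpace X] {E : Type*}
    [NormedAddCommGroup E] [NormedSpace ℝ E]
    (μ : MeasureTheory.SignedMeasure X) (f : X → E) : E :=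
  (∫ x, f x ∂μ.toJordanDecomposition.posPart) - ∫ x, f x ∂μ.toJordanDecomposition.negPart

open scoped NNReal CompactlySupported

/-- A finite measure dominated by a finite inner regular measure is inner regular. -/
theorem MeasureTheory.Measure.InnerRegular.of_le {X : Type*} [TopologicalSpace X] [T2Space X]
    [MeasurableSpace X] [BorelSpace X] {μ ν : Measure X} [IsFiniteMeasure μ]
    [hμ : μ.InnerRegular] (h : ν ≤ μ) : ν.InnerRegular := by
  refine ⟨fun A hA r hr => ?_⟩
  have hν : IsFiniteMeasure ν := isFiniteMeasure_of_le μ h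
  obtain ⟨K, hKA, hK, hlt⟩ := hA.exists_isCompact_sdiff_lt (measure_ne_top μ A)
    (tsub_pos_of_lt hr).ne'
  refine ⟨K, hKA, hK, ?_⟩
  have hlt' : ν (A \ K) < ν A - r := (h _).trans_lt hlt
  have hA' : ν A ≤ ν K + ν (A \ K) :=
    (measure_mono (by simp)).trans (measure_union_le K (A \ K))
  by_contra! hle
  have : ν A < ν A :=
    calc ν A ≤ ν K + ν (A \ K) := hA'
      _ < r + (ν A - r) := ENNReal.add_lt_add_of_le_of_lt (measure_ne_top ν K) hle hlt'
      _ = ν A := add_tsub_cancel_of_le hr.le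
  exact this.false

namespace CompactlySupportedContinuousMap

variable {X : Type*} [TopologicalSpace X]

/-- A linear functional on nonnegative compactly supported functions which is bounded on the
unit ball is a difference of two positive functionals, both bounded on the unit ball. -/
theorem exists_nnreal_linear_sub_eq (L : C_c(X, ℝ≥0) →ₗ[ℝ≥0] ℝ) (M : ℝ)
    (hM : ∀ f : C_c(X, ℝ≥0), (∀ x, f x ≤ 1) → |L f| ≤ M) :
    ∃ P Q : C_c(X, ℝ≥0) →ₗ[ℝ≥0] ℝ≥0, (∀ f, L f = P f - Q f) ∧
      (∀ f : C_c(X, ℝ≥0), (∀ x, f x ≤ 1) → (P f : ℝ) ≤ M) ∧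
      ∀ f : C_c(X, ℝ≥0), (∀ x, f x ≤ 1) → (Q f : ℝ) ≤ 2 * M := by
  have hbdd (f : C_c(X, ℝ≥0)) : BddAbove (Set.image L (Set.Iic f)) := by
    obtain ⟨c, hc⟩ : ∃ c : ℝ≥0, ∀ x, f x ≤ c := by
      obtain ⟨c, hc⟩ := (f.hasCompactSupport.isCompact_range f.continuous).bddAbove
      exact ⟨c, fun x => hc ⟨x, rfl⟩⟩
    refine ⟨(c + 1) * M, ?_⟩
    rintro _ ⟨g, hg, rfl⟩
    have h1 : L g = ((c + 1 : ℝ≥0) : ℝ) * L ((c + 1)⁻¹ • g) := by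
      rw [map_smul, NNReal.smul_def, smul_eq_mul, NNReal.coe_inv,
        mul_inv_cancel_left₀ (by positivity)]
    rw [h1]
    push_cast
    gcongr
    refine (le_abs_self _).trans (hM _ fun x => ?_)
    rw [smul_apply, smul_eq_mul, inv_mul_le_one₀ (by positivity)]
    exact (hg x).trans ((hc x).trans (by simp))
  have hne (f : C_c(X, ℝ≥0)) : (Set.image L (Set.Iic f)).Nonempty := ⟨L f, f, Set.mem_Iic.2 le_rfl, rfl⟩
  set p : C_c(X, ℝ≥0) → ℝ := fun f => sSup (Set.image L (Set.Iic f))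
  have hle {g f : C_c(X, ℝ≥0)} (h : g ≤ f) : L g ≤ p f := le_csSup (hbdd f) ⟨g, h, rfl⟩
  have hpub {f : C_c(X, ℝ≥0)} {c : ℝ} (h : ∀ g ≤ f, L g ≤ c) : p f ≤ c :=
    csSup_le (hne f) (by rintro _ ⟨g, hg, rfl⟩; exact h g hg)
  have hnn (f) : 0 ≤ p f := by simpa using hle (g := 0) (f := f) (fun x => by simp)
  have hadd (f₁ f₂) : p (f₁ + f₂) = p f₁ + p f₂ := by
    apply le_antisymm
    · refine hpub fun g hg => ?_
      obtain ⟨g₂, hg₂⟩ := CompactlySupportedContinuousMap.exists_add_of_le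
        (inf_le_left : g ⊓ f₁ ≤ g)
      have hg₂' : g₂ ≤ f₂ := fun x => by
        have h1 := DFunLike.congr_fun hg₂ x
        have h2 := hg x
        simp only [add_apply, inf_apply] at h1 h2
        rcases le_total (g x) (f₁ x) with h | h
        · rw [inf_eq_left.2 h] at h1
          have : g₂ x = 0 := by simpa using h1
          change g₂ x ≤ f₂ x
          simp [this]
        · rw [inf_eq_right.2 h] at h1
          exact le_of_add_le_add_left (h1.le.trans h2)
      rw [← hg₂, map_add]
      exact add_le_add (hle inf_le_right) (hle hg₂')
    · rw [← le_sub_iff_add_le]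
      refine hpub fun g₁ hg₁ => ?_
      rw [le_sub_comm]
      refine hpub fun g₂ hg₂ => ?_
      rw [le_sub_iff_add_le, add_comm, ← map_add]
      exact hle (add_le_add hg₁ hg₂)
  have hsmul_le (r : ℝ≥0) (f) : r * p f ≤ p (r • f) := by
    rcases eq_or_ne r 0 with rfl | hr
    · simpa using hnn _
    have hr' : (0 : ℝ) < r := by positivity
    rw [← le_div_iff₀' hr']
    refine hpub fun g hg => ?_
    rw [le_div_iff₀' hr']
    have := hle (g := r • g) (f := r • f) (fun x => mul_le_mul_right (hg x) r)
    simpa [NNReal.smul_def] using this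
  have hsmul (r : ℝ≥0) (f) : p (r • f) = r * p f := by
    rcases eq_or_ne r 0 with rfl | hr
    · have : p 0 = 0 := by simpa using hadd 0 0
      simp [this]
    refine le_antisymm ?_ (hsmul_le r f)
    have := hsmul_le r⁻¹ (r • f)
    rw [smul_smul, inv_mul_cancel₀ hr, one_smul, NNReal.coe_inv, inv_mul_le_iff₀ (by positivity)]
      at this
    exact this
  refine ⟨⟨⟨fun f => ⟨p f, hnn f⟩, fun f g => NNReal.eq (hadd f g)⟩,
      fun r f => NNReal.eq (hsmul r f)⟩,
    ⟨⟨fun f => ⟨p f - L f, sub_nonneg.2 (hle le_rfl)⟩, fun f g => NNReal.eq ?_⟩,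
      fun r f => NNReal.eq ?_⟩, fun f => ?_, fun f hf => ?_, fun f hf => ?_⟩
  · change p (f + g) - L (f + g) = (p f - L f) + (p g - L g)
    rw [hadd, map_add]
    ring
  · change p (r • f) - L (r • f) = r * (p f - L f)
    rw [hsmul, map_smul, NNReal.smul_def, smul_eq_mul]
    ring
  · exact (sub_sub_cancel (p f) (L f)).symm
  · exact hpub fun g hg => (le_abs_self _).trans (hM g fun x => (hg x).trans (hf x))
  · have h1 : p f ≤ M := hpub fun g hg =>
      (le_abs_self _).trans (hM g fun x => (hg x).trans (hf x))
    have h2 := neg_le_of_abs_le (hM f hf)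
    change p f - L f ≤ 2 * M
    linarith

end CompactlySupportedContinuousMap

/-- The Riesz measure of a functional bounded on the unit ball is finite. -/
theorem NNRealRMK.isFiniteMeasure_rieszMeasure {X : Type*} [TopologicalSpace X] [T2Space X]
    [LocallyCompactSpace X] [MeasurableSpace X] [BorelSpace X]
    (P : C_c(X, ℝ≥0) →ₗ[ℝ≥0] ℝ≥0) (M : ℝ)
    (hM : ∀ f : C_c(X, ℝ≥0), (∀ x, f x ≤ 1) → (P f : ℝ) ≤ M) :
    IsFiniteMeasure (NNRealRMK.rieszMeasure P) := by
  refine ⟨lt_of_le_of_lt ?_ (ENNReal.ofReal_lt_top (r := M))⟩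
  rw [isOpen_univ.measure_eq_iSup_isCompact]
  refine iSup₂_le fun K _ => iSup_le fun hK => ?_
  obtain ⟨f, hf1, -, hfc, hf⟩ := exists_continuous_one_zero_of_isCompact hK isClosed_empty
    (Set.disjoint_empty K)
  let g : C_c(X, ℝ≥0) := CompactlySupportedContinuousMap.nnrealPart ⟨f, hfc⟩
  calc NNRealRMK.rieszMeasure P K = ∫⁻ x in K, 1 ∂(NNRealRMK.rieszMeasure P) := by simp
    _ ≤ ∫⁻ x in K, g x ∂(NNRealRMK.rieszMeasure P) :=
      setLIntegral_mono' hK.measurableSet fun x hx => by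
        have : f x = 1 := hf1 hx
        simp [g, this]
    _ ≤ ∫⁻ x, g x ∂(NNRealRMK.rieszMeasure P) := setLIntegral_le_lintegral _ _
    _ = P g := NNRealRMK.lintegral_rieszMeasure P g
    _ ≤ ENNReal.ofReal M := by
      rw [← ENNReal.ofReal_coe_nnreal]
      exact ENNReal.ofReal_le_ofReal (hM g fun x => by simpa [g] using (hf x).2)

namespace ZeroAtInftyContinuousMap

variable {X : Type*} [TopologicalSpace X]

theorem abs_apply_le_norm (f : C₀(X, ℝ)) (x : X) : |f x| ≤ ‖f‖ :=
  f.toBCF.norm_coe_le_norm x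

theorem norm_le_of_forall_abs_le {f : C₀(X, ℝ)} {c : ℝ} (hc : 0 ≤ c) (h : ∀ x, |f x| ≤ c) :
    ‖f‖ ≤ c :=
  (BoundedContinuousFunction.norm_le (f := f.toBCF) hc).2 h

/-- A compactly supported continuous function, seen as a function vanishing at infinity. -/
def ofCompactlySupported (f : C_c(X, ℝ)) : C₀(X, ℝ) :=
  ⟨f.toContinuousMap, zero_at_infty f⟩

@[simp]
theorem ofCompactlySupported_apply (f : C_c(X, ℝ)) (x : X) : ofCompactlySupported f x = f x := rfl

/-- Compactly supported functions are dense among those vanishing at infinity. -/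
theorem dense_range_ofCompactlySupported :
    DenseRange (ofCompactlySupported : C_c(X, ℝ) → C₀(X, ℝ)) := by
  refine Metric.denseRange_iff.2 fun f ε hε => ?_
  have hcont : Continuous fun x => f x - max (min (f x) (ε / 2)) (-(ε / 2)) := by fun_prop
  have hev : ∀ᶠ x in cocompact X, |f x| < ε / 2 := by
    have := (zero_at_infty f).abs
    rw [abs_zero] at this
    exact this.eventually_lt_const (by positivity)
  obtain ⟨K, hK, hKf⟩ := mem_cocompact.1 hev
  have hsupp : tsupport (fun x => f x - max (min (f x) (ε / 2)) (-(ε / 2))) ⊆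
      {x | ε / 2 ≤ |f x|} := by
    refine closure_minimal (fun x hx => ?_) (isClosed_le continuous_const (by fun_prop))
    by_contra h
    rw [Set.mem_ofPred_eq, not_le] at h
    have h' := abs_lt.1 h
    rw [Function.mem_support, min_eq_left h'.2.le, max_eq_left h'.1.le, sub_self] at hx
    exact hx rfl
  have hsub : {x | ε / 2 ≤ |f x|} ⊆ K := fun x hx => by
    by_contra h
    have hlt : |f x| < ε / 2 := hKf h
    exact hlt.not_ge hx
  refine ⟨⟨⟨_, hcont⟩, hK.of_isClosed_subset (isClosed_tsupport _) (hsupp.trans hsub)⟩, ?_⟩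
  rw [dist_eq_norm]
  refine (norm_le_of_forall_abs_le (c := ε / 2) (by positivity) fun x => ?_).trans_lt (by linarith)
  rw [sub_apply, ofCompactlySupported_apply]
  change |f x - (f x - max (min (f x) (ε / 2)) (-(ε / 2)))| ≤ ε / 2
  rw [sub_sub_cancel, abs_le]
  exact ⟨le_max_right _ _, max_le (min_le_right _ _) (by linarith)⟩

variable [MeasurableSpace X] [BorelSpace X]

theorem integrable (μ : Measure X) [IsFiniteMeasure μ] (f : C₀(X, ℝ)) : Integrable f μ :=
  f.toBCF.integrable μ

/-- Integration against a finite measure, as a continuous functional on `C₀(X, ℝ)`. -/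
noncomputable def integralCLM (μ : Measure X) [IsFiniteMeasure μ] : C₀(X, ℝ) →L[ℝ] ℝ :=
  LinearMap.mkContinuous
    { toFun := fun f => ∫ x, f x ∂μ
      map_add' := fun f g => integral_add (f.integrable μ) (g.integrable μ)
      map_smul' := fun r f => integral_const_mul r f }
    (μ.real Set.univ) fun f => by
      rw [mul_comm]
      exact norm_integral_le_of_norm_le_const (ae_of_all _ f.abs_apply_le_norm)

@[simp]
theorem integralCLM_apply (μ : Measure X) [IsFiniteMeasure μ] (f : C₀(X, ℝ)) :
    integralCLM μ f = ∫ x, f x ∂μ := rfl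

/-- **Riesz–Markov–Kakutani** for the dual of `C₀(X, ℝ)`: every continuous functional is a
difference of integrals against two finite regular measures. -/
theorem exists_eq_integralCLM_sub [T2Space X] [LocallyCompactSpace X] (φ : C₀(X, ℝ) →L[ℝ] ℝ) :
    ∃ (μ ν : Measure X) (_ : IsFiniteMeasure μ) (_ : IsFiniteMeasure ν),
      μ.Regular ∧ ν.Regular ∧ φ = integralCLM μ - integralCLM ν := by
  let L : C_c(X, ℝ≥0) →ₗ[ℝ≥0] ℝ :=
    { toFun := fun f => φ (ofCompactlySupported f.toReal)
      map_add' := fun f g => by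
        rw [← map_add]
        congr 1
        ext x
        simp
      map_smul' := fun r f => by
        rw [RingHom.id_apply, NNReal.smul_def, ← map_smul]
        congr 1
        ext x
        simp [NNReal.smul_def] }
  obtain ⟨P, Q, hPQ, hP, hQ⟩ :=
    CompactlySupportedContinuousMap.exists_nnreal_linear_sub_eq L ‖φ‖ fun f hf => by
      refine (φ.le_opNorm _).trans (mul_le_of_le_one_right (norm_nonneg _) ?_)
      exact norm_le_of_forall_abs_le zero_le_one fun x => by simpa using hf x
  have hPfin := NNRealRMK.isFiniteMeasure_rieszMeasure P _ hP
  have hQfin := NNRealRMK.isFiniteMeasure_rieszMeasure Q _ hQ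
  refine ⟨NNRealRMK.rieszMeasure P, NNRealRMK.rieszMeasure Q, hPfin, hQfin, inferInstance,
    inferInstance, ?_⟩
  have hnn (f : C_c(X, ℝ≥0)) : φ (ofCompactlySupported f.toReal) =
      (integralCLM (NNRealRMK.rieszMeasure P) - integralCLM (NNRealRMK.rieszMeasure Q))
        (ofCompactlySupported f.toReal) := by
    simpa [L] using hPQ f
  refine ContinuousLinearMap.coeFn_injective
    (dense_range_ofCompactlySupported.equalizer φ.continuous (ContinuousLinearMap.continuous _) ?_)
  ext f
  have hf : ofCompactlySupported f = ofCompactlySupported f.nnrealPart.toReal -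
      ofCompactlySupported (-f).nnrealPart.toReal := by
    ext x
    simp
  rw [Function.comp_apply, Function.comp_apply, hf, map_sub, map_sub, hnn, hnn]

end ZeroAtInftyContinuousMap

section SignedMeasure

variable {X : Type*} [MeasurableSpace X]

theorem svInt_toSignedMeasure_sub (μ ν : Measure X) [IsFiniteMeasure μ] [IsFiniteMeasure ν]
    {f : X → ℝ} (hμ : Integrable f μ) (hν : Integrable f ν) :
    svInt (μ.toSignedMeasure - ν.toSignedMeasure) f = ∫ x, f x ∂μ - ∫ x, f x ∂ν := by
  have hsum : μ + (ν - μ) = ν + (μ - ν) := by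
    rw [← Measure.toSignedMeasure_eq_toSignedMeasure_iff, Measure.toSignedMeasure_add,
      Measure.toSignedMeasure_add]
    have := Measure.sub_toSignedMeasure_eq_toSignedMeasure_sub (μ := μ) (ν := ν)
    rwa [sub_eq_sub_iff_add_eq_add, add_comm (Measure.toSignedMeasure (μ - ν))] at this
  have hint : ∫ x, f x ∂(μ + (ν - μ)) = ∫ x, f x ∂(ν + (μ - ν)) := by rw [hsum]
  rw [integral_add_measure hμ (hν.mono_measure Measure.sub_le),
    integral_add_measure hν (hμ.mono_measure Measure.sub_le)] at hint
  rw [svInt, Measure.toJordanDecomposition_toSignedMeasure_sub,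
    Measure.jordanDecompositionOfToSignedMeasureSub_posPart,
    Measure.jordanDecompositionOfToSignedMeasureSub_negPart]
  linarith

theorem totalVariation_toSignedMeasure_sub_le (μ ν : Measure X) [IsFiniteMeasure μ]
    [IsFiniteMeasure ν] :
    (μ.toSignedMeasure - ν.toSignedMeasure).totalVariation ≤ μ + ν := by
  rw [SignedMeasure.totalVariation, Measure.toJordanDecomposition_toSignedMeasure_sub]
  exact add_le_add Measure.sub_le Measure.sub_le

variable [TopologicalSpace X] [T2Space X] [LocallyCompactSpace X] [BorelSpace X]

/-- A Radon signed measure is determined by its integrals against `C₀(X, ℝ)`. -/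
theorem eq_zero_of_forall_svInt_eq_zero (μ : SignedMeasure X)
    (hμ : μ.totalVariation.InnerRegular) (h : ∀ f : C₀(X, ℝ), svInt μ f = 0) : μ = 0 := by
  have hpos : μ.toJordanDecomposition.posPart.InnerRegular :=
    Measure.InnerRegular.of_le (hμ := hμ) (Measure.le_add_right le_rfl)
  have hneg : μ.toJordanDecomposition.negPart.InnerRegular :=
    Measure.InnerRegular.of_le (hμ := hμ) (Measure.le_add_left le_rfl)
  have heq : μ.toJordanDecomposition.posPart = μ.toJordanDecomposition.negPart :=
    Measure.ext_of_integral_eq_on_compactlySupported fun f =>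
      sub_eq_zero.1 (h (ZeroAtInftyContinuousMap.ofCompactlySupported f))
  rw [← μ.toSignedMeasure_toJordanDecomposition, JordanDecomposition.toSignedMeasure, sub_eq_zero]
  exact Measure.toSignedMeasure_congr heq

end SignedMeasure

section ReproducingKernel

variable {X : Type*} [TopologicalSpace X] {H : Type*} [NormedAddCommGroup H]
  [InnerProductSpace ℝ H] [CompleteSpace H]

/-- If all kernel sections vanish at infinity and the feature map is bounded with total range,
then every element of the RKHS is a function vanishing at infinity. -/
theorem exists_clm_zeroAtInfty {Φ : X → H} {C : ℝ} (hC : 0 ≤ C) (hΦ : ∀ x, ‖Φ x‖ ≤ C)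
    (hc : ∀ x, Continuous fun y => ⟪Φ x, Φ y⟫)
    (h0 : ∀ x, Tendsto (fun y => ⟪Φ x, Φ y⟫) (cocompact X) (𝓝 0))
    (htotal : ∀ f : H, (∀ x, ⟪f, Φ x⟫ = 0) → f = 0) :
    ∃ J : H →L[ℝ] C₀(X, ℝ), ∀ f x, J f x = ⟪f, Φ x⟫ := by
  have hdense : (Submodule.span ℝ (Set.range Φ)).topologicalClosure = ⊤ := by
    rw [Submodule.topologicalClosure_eq_top_iff, Submodule.eq_bot_iff]
    intro f hf
    refine htotal f fun x => ?_
    rw [real_inner_comm]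
    exact hf _ (Submodule.subset_span ⟨x, rfl⟩)
  have hspan : ∀ f ∈ Submodule.span ℝ (Set.range Φ), (Continuous fun y => ⟪f, Φ y⟫) ∧
      Tendsto (fun y => ⟪f, Φ y⟫) (cocompact X) (𝓝 0) := by
    intro f hf
    induction hf using Submodule.span_induction with
    | mem _ h => obtain ⟨x, rfl⟩ := h; exact ⟨hc x, h0 x⟩
    | zero => simpa using ⟨continuous_const, tendsto_const_nhds⟩
    | add f g _ _ hf hg =>
      simp only [inner_add_left]
      exact ⟨hf.1.add hg.1, by simpa using hf.2.add hg.2⟩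
    | smul r f _ hf =>
      simp only [real_inner_smul_left]
      exact ⟨hf.1.const_mul r, by simpa using hf.2.const_mul r⟩
  have happrox (f : H) (ε : ℝ) (hε : 0 < ε) : ∃ g ∈ Submodule.span ℝ (Set.range Φ),
      ∀ x, |⟪f, Φ x⟫ - ⟪g, Φ x⟫| < ε := by
    have hf : f ∈ closure (Submodule.span ℝ (Set.range Φ) : Set H) := by
      rw [← Submodule.topologicalClosure_coe, hdense]
      trivial
    obtain ⟨g, hg, hfg⟩ := Metric.mem_closure_iff.1 hf (ε / (C + 1)) (by positivity)
    refine ⟨g, hg, fun x => ?_⟩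
    rw [dist_eq_norm, lt_div_iff₀ (by positivity)] at hfg
    rw [← inner_sub_left]
    calc |⟪f - g, Φ x⟫| ≤ ‖f - g‖ * ‖Φ x‖ := abs_real_inner_le_norm _ _
      _ ≤ ‖f - g‖ * (C + 1) := by gcongr; linarith [hΦ x]
      _ < ε := hfg
  have hcont (f : H) : Continuous fun y => ⟪f, Φ y⟫ := by
    refine continuous_of_uniform_approx_of_continuous fun u hu => ?_
    obtain ⟨ε, hε, hu⟩ := Metric.mem_uniformity_dist.1 hu
    obtain ⟨g, hg, hfg⟩ := happrox f ε hε
    exact ⟨_, (hspan g hg).1, fun y => hu (hfg y)⟩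
  have hzero (f : H) : Tendsto (fun y => ⟪f, Φ y⟫) (cocompact X) (𝓝 0) := by
    refine Metric.tendsto_nhds.2 fun ε hε => ?_
    obtain ⟨g, hg, hfg⟩ := happrox f (ε / 2) (by positivity)
    filter_upwards [Metric.tendsto_nhds.1 (hspan g hg).2 (ε / 2) (by positivity)] with y hy
    calc dist ⟪f, Φ y⟫ 0 ≤ dist ⟪f, Φ y⟫ ⟪g, Φ y⟫ + dist ⟪g, Φ y⟫ 0 := dist_triangle _ _ _
      _ < ε / 2 + ε / 2 := add_lt_add (hfg y) hy
      _ = ε := add_halves ε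
  refine ⟨LinearMap.mkContinuous
    { toFun := fun f => ⟨⟨fun y => ⟪f, Φ y⟫, hcont f⟩, hzero f⟩
      map_add' := fun f g => by ext y; exact inner_add_left f g (Φ y)
      map_smul' := fun r f => by ext y; exact real_inner_smul_left f (Φ y) r } C fun f => ?_,
    fun f x => rfl⟩
  refine ZeroAtInftyContinuousMap.norm_le_of_forall_abs_le (by positivity) fun y => ?_
  calc |⟪f, Φ y⟫| ≤ ‖f‖ * ‖Φ y‖ := abs_real_inner_le_norm _ _
    _ ≤ C * ‖f‖ := by rw [mul_comm]; gcongr; exact hΦ y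

/-- The energy of a signed measure is nonnegative, and it vanishes only if the
measure annihilates the RKHS. -/
theorem svInt_svInt_inner_nonneg_and_eq_zero [MeasurableSpace X] [BorelSpace X] {Φ : X → H}
    {J : H →L[ℝ] C₀(X, ℝ)} (hJ : ∀ f x, J f x = ⟪f, Φ x⟫) (μ : SignedMeasure X) :
    0 ≤ svInt μ (fun x => svInt μ fun y => ⟪Φ x, Φ y⟫) ∧
      (svInt μ (fun x => svInt μ fun y => ⟪Φ x, Φ y⟫) = 0 ↔ ∀ f, svInt μ (J f) = 0) := by
  let ℓ : H →L[ℝ] ℝ :=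
    (ZeroAtInftyContinuousMap.integralCLM μ.toJordanDecomposition.posPart -
      ZeroAtInftyContinuousMap.integralCLM μ.toJordanDecomposition.negPart).comp J
  have hℓ (f : H) : svInt μ (J f) = ℓ f := rfl
  obtain ⟨h, hh⟩ : ∃ h : H, ∀ f, ℓ f = ⟪h, f⟫ :=
    ⟨(InnerProductSpace.toDual ℝ H).symm ℓ, fun f => by simp⟩
  have henergy : svInt μ (fun x => svInt μ fun y => ⟪Φ x, Φ y⟫) = ⟪h, h⟫ := by
    have hinner : (fun x => svInt μ fun y => ⟪Φ x, Φ y⟫) = J h := by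
      ext x
      rw [hJ, ← hh, ← hℓ]
      exact congrArg (svInt μ) (funext fun y => (hJ _ y).symm)
    rw [hinner, hℓ, hh]
  rw [henergy]
  refine ⟨real_inner_self_nonneg, fun h0 f => ?_, fun h0 => ?_⟩
  · rw [hℓ, hh, inner_self_eq_zero.1 h0, inner_zero_left]
  · rw [← hh, ← hℓ, h0]

end ReproducingKernel

/-- A subspace whose only annihilating functional is zero is dense. -/
theorem Submodule.dense_of_forall_functional_eq_zero {E : Type*} [NormedAddCommGroup E]
    [NormedSpace ℝ E] (S : Submodule ℝ E)
    (h : ∀ φ : E →L[ℝ] ℝ, (∀ f ∈ S, φ f = 0) → φ = 0) : Dense (S : Set E) := by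
  by_contra hS
  obtain ⟨g, hg⟩ : ∃ g, g ∉ closure (S : Set E) := by
    simpa [Dense] using hS
  obtain ⟨φ, u, hφu, hug⟩ :=
    geometric_hahn_banach_closed_point S.convex.closure isClosed_closure hg
  have hann : ∀ f ∈ S, φ f = 0 := by
    intro f hf
    by_contra hne
    have := hφu _ (subset_closure (S.smul_mem (u / φ f) hf))
    rw [map_smul, smul_eq_mul, div_mul_cancel₀ _ hne] at this
    exact this.false
  have h0 := hφu _ (subset_closure S.zero_mem)
  rw [h φ hann] at h0 hug
  simp only [zero_apply] at h0 hug
  linarith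

/-- Let `X` be a locally compact Hausdorff space and `k` a bounded
symmetric positive definite kernel on `X` with `k(·,x) ∈ C₀(X)` for all `x`, with RKHS
`H`.  Then `k` is c₀-universal iff `∫∫ k(x,y) dμ(x) dμ(y) > 0` for every nonzero finite
signed Radon measure `μ` on `X`. -/
theorem stmt5
    {X : Type*} [TopologicalSpace X] [T2Space X] [LocallyCompactSpace X]
    [MeasurableSpace X] [BorelSpace X]
    (k : X → X → ℝ)
    (hkbdd : ∃ C : ℝ, ∀ x y : X, |k x y| ≤ C)
    (hkC0 : ∀ x : X, Continuous (fun y => k y x) ∧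
      Tendsto (fun y => k y x) (cocompact X) (𝓝 0))
    {H : Type*} [NormedAddCommGroup H] [InnerProductSpace ℝ H] [CompleteSpace H]
    (T : H →ₗ[ℝ] (X → ℝ)) (hT : Function.Injective T)
    (Φ : X → H)
    (hk : ∀ x y : X, k x y = ⟪Φ x, Φ y⟫)
    (hrepro : ∀ (f : H) (x : X), T f x = ⟪f, Φ x⟫) :
    (∀ (g : C₀(X, ℝ)) (ε : ℝ), 0 < ε → ∃ f : H, ∀ x : X, |T f x - g x| ≤ ε) ↔
      ∀ μ : MeasureTheory.SignedMeasure X, μ.totalVariation.InnerRegular → μ ≠ 0 →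
        0 < svInt μ (fun x => svInt μ (fun y => k x y)) := by
  obtain ⟨C, hC⟩ := hkbdd
  have hΦ (x : X) : ‖Φ x‖ ≤ √C := by
    refine Real.le_sqrt_of_sq_le ?_
    rw [← real_inner_self_eq_norm_sq, ← hk]
    exact (le_abs_self _).trans (hC x x)
  obtain ⟨J, hJ⟩ := exists_clm_zeroAtInfty (Real.sqrt_nonneg C) hΦ
    (fun x => by simpa only [hk, real_inner_comm] using (hkC0 x).1)
    (fun x => by simpa only [hk, real_inner_comm] using (hkC0 x).2)
    (fun f hf => hT (by ext x; simp [hrepro, hf]))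
  have hTJ (f : H) (x : X) : T f x = J f x := by rw [hrepro, hJ]
  obtain rfl : k = fun x y => ⟪Φ x, Φ y⟫ := funext₂ hk
  constructor
  · intro hdense μ hμ hne
    obtain ⟨hnonneg, hzero⟩ := svInt_svInt_inner_nonneg_and_eq_zero hJ μ
    refine hnonneg.lt_of_ne fun h0 => hne ?_
    have hann := hzero.1 h0.symm
    have hrange : DenseRange J := Metric.denseRange_iff.2 fun g ε hε => by
      obtain ⟨f, hf⟩ := hdense g (ε / 2) (by positivity)
      refine ⟨f, ?_⟩
      rw [dist_comm, dist_eq_norm]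
      refine (ZeroAtInftyContinuousMap.norm_le_of_forall_abs_le (c := ε / 2) (by positivity)
        fun x => ?_).trans_lt (by linarith)
      simpa [hTJ] using hf x
    refine eq_zero_of_forall_svInt_eq_zero μ hμ fun g => ?_
    let φ := ZeroAtInftyContinuousMap.integralCLM μ.toJordanDecomposition.posPart -
      ZeroAtInftyContinuousMap.integralCLM μ.toJordanDecomposition.negPart
    exact congrFun (hrange.equalizer (g := φ) (h := fun _ => 0) φ.continuous continuous_const
      (funext hann)) g
  · intro hpos g ε hε
    have hrange : Dense (LinearMap.range J.toLinearMap : Set C₀(X, ℝ)) := by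
      refine Submodule.dense_of_forall_functional_eq_zero _ fun φ hφ => ?_
      obtain ⟨μ, ν, _, _, _, _, rfl⟩ := ZeroAtInftyContinuousMap.exists_eq_integralCLM_sub φ
      have hsv (f : C₀(X, ℝ)) : svInt (μ.toSignedMeasure - ν.toSignedMeasure) f =
          (ZeroAtInftyContinuousMap.integralCLM μ - ZeroAtInftyContinuousMap.integralCLM ν) f :=
        svInt_toSignedMeasure_sub μ ν (f.integrable μ) (f.integrable ν)
      by_contra hne
      have hreg : (μ.toSignedMeasure - ν.toSignedMeasure).totalVariation.InnerRegular :=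
        Measure.InnerRegular.of_le (totalVariation_toSignedMeasure_sub_le μ ν)
      refine (hpos _ hreg fun h0 => hne ?_).ne'
        ((svInt_svInt_inner_nonneg_and_eq_zero hJ _).2.2 fun f => ?_)
      · ext f
        rw [← hsv, h0]
        simp [svInt, SignedMeasure.toJordanDecomposition_zero]
      · rw [hsv]
        exact hφ _ ⟨f, rfl⟩
    obtain ⟨_, hf, f, rfl⟩ := Metric.dense_iff.1 hrange g ε hε
    refine ⟨f, fun x => ?_⟩
    rw [hTJ]
    refine (ZeroAtInftyContinuousMap.abs_apply_le_norm (J f - g) x).trans ?_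
    rw [← dist_eq_norm]
    exact (Metric.mem_ball.1 hf).le
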